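/- arXiv:2402.02573 — 6 statements merged into one kernel-verified Lean document; each statement's English description precedes it below -/
import Mathlib

section
/- Let X be a finite abstract simplicial complex, d ≥ 1, and R a commutative ring. (i) If 0 ≠ c ∈ H^d(X;R), then there exists a strong connectivity component Y of dimension d of X such that the restriction of c to Y is nonzero in H^d(Y;R); in particular the restriction map from H^d(X;R) to the direct sum of H^d(Y;R) over all d-dimensional strong connectivity components Y is injective. (ii) If a, b ∈ H^*(X;R) satisfy a∪b ≠ 0 in H^d(X;R), then there exists such a component Y with (a|_Y)∪(b|_Y) ≠ 0 in H^d(Y;R). (iii) If moreover d is the maximal dimension of a face of X, then the restriction map H^d(X;R) → ⊕_Y H^d(Y;R) is an isomorphism. -/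
/-!
The group `H^d(X; R)` only sees the `d`-faces and their facets, apart from the cocycle condition.
Two `d`-faces with a common facet are adjacent, so each facet of a `d`-face belongs to exactly one
strong connectivity component of dimension `d`. Hence primitives of a `d`-cochain on the components
agree wherever they meet in dimension `d - 1`, and glue to a primitive on `X`. This is injectivity
of the restriction map, and its contrapositive detects nonzero classes, cup products among them.

Each `d`-face also lies in exactly one component, so `d`-cochains on the components glue to a
`d`-cochain on `X`, and in the top dimension every cochain is a cocycle.
-/

open Finset MeasureTheory
open scoped ENNReal

/-- A finite abstract simplicial complex on vertex type `V`. -/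
structure SComplex (V : Type) where
  faces : Finset (Finset V)
  down_closed : ∀ ⦃s⦄, s ∈ faces → ∀ ⦃t : Finset V⦄, t ⊆ s → t ∈ faces

/-- Simplicial coboundary of a cochain. -/
def delta {V : Type} [LinearOrder V] {R : Type} [CommRing R]
    (a : Finset V → R) : Finset V → R :=
  fun s => ∑ v ∈ s, (-1 : R) ^ (s.filter (fun w => w < v)).card * a (s.erase v)

def IsCocycle {V : Type} [LinearOrder V] (X : SComplex V) (R : Type) [CommRing R]
    (k : ℕ) (a : Finset V → R) : Prop :=
  ∀ s ∈ X.faces, s.card = k + 2 → delta a s = 0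

def IsCoboundary {V : Type} [LinearOrder V] (X : SComplex V) (R : Type) [CommRing R]
    (k : ℕ) (a : Finset V → R) : Prop :=
  ∃ f : Finset V → R, ∀ s ∈ X.faces, s.card = k + 1 → a s = delta f s

/-- The simplicial cup product of a `k`-cochain and an `l`-cochain. -/
def cup {V : Type} [LinearOrder V] {R : Type} [CommRing R] (k l : ℕ)
    (a b : Finset V → R) : Finset V → R :=
  fun s => a ((s.sort (· ≤ ·)).take (k + 1)).toFinset *
    b ((s.sort (· ≤ ·)).drop k).toFinset

/-- Bernoulli measure on `Bool` with success probability `p`. -/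
noncomputable def bernoulliMeasure (p : ℝ≥0∞) : Measure Bool :=
  p • Measure.dirac true + (1 - p) • Measure.dirac false

/-- Each subset `s` with `|s| = i+1` is selected independently with probability `p i`. -/
noncomputable def selectionMeasure (n : ℕ) (p : ℕ → ℝ≥0∞) :
    Measure (Finset (Fin n) → Bool) :=
  Measure.pi fun s => bernoulliMeasure (p (s.card - 1))

/-- The lower multiparametric model: maximal complex contained in the selected hypergraph. -/
def lowerComplex (n : ℕ) (ω : Finset (Fin n) → Bool) : SComplex (Fin n) where
  faces := Finset.univ.filter fun s => ∀ t ⊆ s, 2 ≤ t.card → ω t = true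
  down_closed := by
    intro s hs t hts
    simp only [Finset.mem_filter, Finset.mem_univ, true_and] at hs ⊢
    exact fun u hu hc => hs u (hu.trans hts) hc

/-- The upper multiparametric model: minimal complex containing the selected hypergraph. -/
def upperComplex (n : ℕ) (ω : Finset (Fin n) → Bool) : SComplex (Fin n) where
  faces := Finset.univ.filter fun s =>
    s.card ≤ 1 ∨ ∃ t, s ⊆ t ∧ 2 ≤ t.card ∧ ω t = true
  down_closed := by
    intro s hs t hts
    simp only [Finset.mem_filter, Finset.mem_univ, true_and] at hs ⊢
    rcases hs with h | ⟨u, hsu, hc, hω⟩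
    · exact Or.inl (le_trans (Finset.card_le_card hts) h)
    · exact Or.inr ⟨u, hts.trans hsu, hc, hω⟩

/-- Selection probabilities of the lower model: `p i = n ^ (-α i)`. -/
noncomputable def lowerP (α : ℕ → ℝ) (n : ℕ) : ℕ → ℝ≥0∞ :=
  fun i => ENNReal.ofReal ((n : ℝ) ^ (-(α i)))

/-- Selection probabilities of the upper model with `D` parameters. -/
noncomputable def upperP (D : ℕ) (α : ℕ → ℝ) (n : ℕ) : ℕ → ℝ≥0∞ :=
  fun i => if i ≤ D then ENNReal.ofReal ((n : ℝ) ^ (-(α i))) else 0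

def S1 (α : ℕ → ℝ) (k : ℕ) : ℝ :=
  ∑ i ∈ Finset.Icc 1 (k + 1), ((k + 1).choose i : ℝ) * α i

def S2 (α : ℕ → ℝ) (k : ℕ) : ℝ :=
  ∑ i ∈ Finset.Icc 1 k, ((k + 2).choose (i + 1) : ℝ) * α i

/-- The `d`-dimensional faces of a complex. -/
def dimFaces {V : Type} [DecidableEq V] (X : SComplex V) (d : ℕ) : Finset (Finset V) :=
  X.faces.filter fun s => s.card = d + 1

/-- Adjacency of `d`-faces: sharing a `(d-1)`-dimensional face. -/
def AdjRel {V : Type} [DecidableEq V] (X : SComplex V) (d : ℕ) (σ τ : Finset V) : Prop :=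
  σ ∈ dimFaces X d ∧ τ ∈ dimFaces X d ∧ d ≤ (σ ∩ τ).card

def IsPure {V : Type} [DecidableEq V] (X : SComplex V) (d : ℕ) : Prop :=
  ∀ s ∈ X.faces, ∃ t ∈ X.faces, s ⊆ t ∧ t.card = d + 1

def StronglyConnected {V : Type} [DecidableEq V] (X : SComplex V) (d : ℕ) : Prop :=
  (dimFaces X d).Nonempty ∧
    ∀ σ ∈ dimFaces X d, ∀ τ ∈ dimFaces X d, Relation.ReflTransGen (AdjRel X d) σ τ

open scoped Classical in
/-- The strong connectivity component of the `d`-face `σ0`. -/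
noncomputable def component {V : Type} [DecidableEq V] (X : SComplex V) (d : ℕ)
    (σ0 : Finset V) : SComplex V where
  faces := (X.faces.filter fun τ =>
      τ.card = d + 1 ∧ Relation.ReflTransGen (AdjRel X d) σ0 τ).biUnion Finset.powerset
  down_closed := by
    intro s hs t hts
    simp only [Finset.mem_biUnion, Finset.mem_powerset] at hs ⊢
    obtain ⟨u, hu, hsu⟩ := hs
    exact ⟨u, hu, hts.trans hsu⟩

/-- The `d`-skeleton of a complex. -/
def skeleton {V : Type} [DecidableEq V] (X : SComplex V) (d : ℕ) : SComplex V where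
  faces := X.faces.filter fun s => s.card ≤ d + 1
  down_closed := by
    intro s hs t hts
    simp only [Finset.mem_filter] at hs ⊢
    exact ⟨X.down_closed hs.1 hts, le_trans (Finset.card_le_card hts) hs.2⟩

/-- The subcomplex generated by a family of faces. -/
def generated {V : Type} [DecidableEq V] (F : Finset (Finset V)) : SComplex V where
  faces := F.biUnion Finset.powerset
  down_closed := by
    intro s hs t hts
    simp only [Finset.mem_biUnion, Finset.mem_powerset] at hs ⊢
    obtain ⟨u, hu, hsu⟩ := hs
    exact ⟨u, hu, hts.trans hsu⟩

/-- There is an elementary collapse from `X` to `Y`. -/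
def ElemCollapse {V : Type} [DecidableEq V] (X Y : SComplex V) : Prop :=
  ∃ σ τ : Finset V, σ ∈ X.faces ∧ τ ∈ X.faces ∧ σ ⊂ τ ∧ τ.card = σ.card + 1 ∧
    (∀ ρ ∈ X.faces, σ ⊆ ρ → ρ = σ ∨ ρ = τ) ∧ Y.faces = X.faces \ {σ, τ}

/-- `X` collapses onto dimension `l`. -/
def CollapsesOntoDim {V : Type} [DecidableEq V] (X : SComplex V) (l : ℤ) : Prop :=
  ∃ Y : SComplex V, Relation.ReflTransGen ElemCollapse X Y ∧
    ∀ s ∈ Y.faces, (s.card : ℤ) ≤ l + 1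

/-- Expected number of embeddings of `C` into the lower multiparametric complex. -/
noncomputable def expEmb {W : Type} [Fintype W] [DecidableEq W] (C : SComplex W)
    (α : ℕ → ℝ) (n : ℕ) : ℝ≥0∞ :=
  ∫⁻ ω, (Nat.card {φ : W ↪ Fin n //
      ∀ σ ∈ C.faces, σ.map φ ∈ (lowerComplex n ω).faces} : ℝ≥0∞)
    ∂ selectionMeasure n (lowerP α n)

section Components

variable {V : Type} [DecidableEq V] {X : SComplex V} {d : ℕ} {σ τ : Finset V}

theorem mem_dimFaces : σ ∈ dimFaces X d ↔ σ ∈ X.faces ∧ σ.card = d + 1 :=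
  Finset.mem_filter

instance AdjRel.stdSymm : Std.Symm (AdjRel X d) where
  symm σ τ h := ⟨h.2.1, h.1, Finset.inter_comm σ τ ▸ h.2.2⟩

theorem adjRel_of_common_facet {t : Finset V} (hσ : σ ∈ dimFaces X d) (hτ : τ ∈ dimFaces X d)
    (htσ : t ⊆ σ) (htτ : t ⊆ τ) (ht : t.card = d) : AdjRel X d σ τ :=
  ⟨hσ, hτ, ht ▸ Finset.card_le_card (Finset.subset_inter htσ htτ)⟩

theorem component_eq_of_reflTransGen (h : Relation.ReflTransGen (AdjRel X d) σ τ) :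
    component X d σ = component X d τ := by
  have h_class : Relation.ReflTransGen (AdjRel X d) σ = Relation.ReflTransGen (AdjRel X d) τ :=
    funext fun ρ => propext ⟨(symm h).trans, h.trans⟩
  unfold component
  rw [SComplex.mk.injEq, h_class]

theorem mem_dimFaces_component : τ ∈ dimFaces (component X d σ) d ↔
    τ ∈ dimFaces X d ∧ Relation.ReflTransGen (AdjRel X d) σ τ := by
  simp only [mem_dimFaces, component, Finset.mem_biUnion, Finset.mem_filter, Finset.mem_powerset]
  constructor
  · rintro ⟨⟨ρ, ⟨hρX, hρ_card, hσρ⟩, hτρ⟩, hτ_card⟩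
    obtain rfl : τ = ρ := Finset.eq_of_subset_of_card_le hτρ (hρ_card.trans hτ_card.symm).le
    exact ⟨⟨hρX, hτ_card⟩, hσρ⟩
  · rintro ⟨⟨hτX, hτ_card⟩, hστ⟩
    exact ⟨⟨τ, ⟨hτX, hτ_card, hστ⟩, subset_rfl⟩, hτ_card⟩

theorem exists_eq_on_components {A : Type*} (g : Finset V → Finset V → A)
    (hg : ∀ σ ∈ dimFaces X d, ∀ τ ∈ dimFaces X d,
      Relation.ReflTransGen (AdjRel X d) σ τ → g σ = g τ) :
    ∃ c : Finset V → A, ∀ σ ∈ dimFaces X d, ∀ s ∈ dimFaces (component X d σ) d, c s = g σ s := by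
  refine ⟨fun s => g s s, fun σ hσ s hs => ?_⟩
  obtain ⟨hsX, hσs⟩ := mem_dimFaces_component.mp hs
  exact congrFun (hg σ hσ s hsX hσs).symm s

end Components

section Cochains

variable {V : Type} [LinearOrder V] {X : SComplex V} {d : ℕ} {R : Type} [CommRing R]

theorem delta_congr {a b : Finset V → R} {s : Finset V}
    (h : ∀ v ∈ s, a (s.erase v) = b (s.erase v)) : delta a s = delta b s :=
  Finset.sum_congr rfl fun v hv => by rw [h v hv]

theorem isCoboundary_iff_exists_dimFaces {c : Finset V → R} :
    IsCoboundary X R d c ↔ ∃ f : Finset V → R, ∀ s ∈ dimFaces X d, c s = delta f s := by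
  simp only [IsCoboundary, mem_dimFaces, and_imp]

theorem isCoboundary_of_forall_eq_zero {c : Finset V → R} (h : ∀ s ∈ dimFaces X d, c s = 0) :
    IsCoboundary X R d c :=
  isCoboundary_iff_exists_dimFaces.mpr ⟨0, fun s hs => by simp [h s hs, delta]⟩

theorem isCocycle_of_forall_card_le (h : ∀ s ∈ X.faces, s.card ≤ d + 1) (c : Finset V → R) :
    IsCocycle X R d c := by
  intro s hs hs_card
  have := h s hs
  omega

open scoped Classical in
theorem exists_delta_eq_of_agree_on_facets (φ : Finset V → Finset V → R)
    (hφ : ∀ σ ∈ dimFaces X d, ∀ τ ∈ dimFaces X d, ∀ t ⊆ σ, t ⊆ τ → t.card = d → φ σ t = φ τ t) :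
    ∃ f : Finset V → R, ∀ s ∈ dimFaces X d, delta f s = delta (φ s) s := by
  refine ⟨fun t => if ht : ∃ σ ∈ dimFaces X d, t ⊆ σ then φ ht.choose t else 0, fun s hs => ?_⟩
  refine delta_congr fun v hv => ?_
  have h_coface : ∃ σ ∈ dimFaces X d, s.erase v ⊆ σ := ⟨s, hs, Finset.erase_subset v s⟩
  have h_card : (s.erase v).card = d := by
    rw [Finset.card_erase_of_mem hv, (mem_dimFaces.mp hs).2, Nat.add_sub_cancel]
  obtain ⟨h_chosen, h_sub⟩ := h_coface.choose_spec
  rw [dif_pos h_coface]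
  exact hφ _ h_chosen s hs _ h_sub (Finset.erase_subset v s) h_card

theorem isCoboundary_of_forall_component {c : Finset V → R}
    (h : ∀ σ ∈ dimFaces X d, IsCoboundary (component X d σ) R d c) :
    IsCoboundary X R d c := by
  -- Indexing the primitives by the complex, not by one of its faces, makes the primitives chosen
  -- at two `d`-faces of the same component equal.
  have h_primitive (Y : SComplex V) (hY : IsCoboundary Y R d c) :
      ∃ f : Finset V → R, ∀ s ∈ dimFaces Y d, c s = delta f s :=
    isCoboundary_iff_exists_dimFaces.mp hY
  choose! F hF using h_primitive
  obtain ⟨f, hf⟩ : ∃ f : Finset V → R, ∀ s ∈ dimFaces X d,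
      delta f s = delta (F (component X d s)) s := by
    refine exists_delta_eq_of_agree_on_facets _ fun σ hσ τ hτ t htσ htτ ht => ?_
    rw [component_eq_of_reflTransGen (.single (adjRel_of_common_facet hσ hτ htσ htτ ht))]
  refine isCoboundary_iff_exists_dimFaces.mpr ⟨f, fun s hs => ?_⟩
  rw [hf s hs]
  exact hF _ (h s hs) s (mem_dimFaces_component.mpr ⟨hs, .refl⟩)

theorem exists_component_not_isCoboundary {c : Finset V → R} (hc : ¬ IsCoboundary X R d c) :
    ∃ σ ∈ dimFaces X d, ¬ IsCoboundary (component X d σ) R d c := by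
  contrapose! hc
  exact isCoboundary_of_forall_component hc

end Cochains

/-- cohomology in dimension `d`, the image of the cup product, concentrate on
`d`-dimensional strong connectivity components: (i) a nonzero class restricts to a nonzero
class on some component, and the restriction map to the direct sum over components is
injective; (ii) likewise for a nonvanishing cup product; (iii) if `d` is the maximal
dimension of a face, the restriction map is moreover surjective (an isomorphism). -/
theorem cohomology_concentrated_on_components {V : Type} [LinearOrder V]
    (X : SComplex V) (d : ℕ) (hd : 1 ≤ d) (R : Type) [CommRing R] :
    -- (i) nonzero classes are detected on some component, i.e. the restriction map
    -- `H^d(X) → ⊕_Y H^d(Y)` is injective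
    ((∀ c : Finset V → R, IsCocycle X R d c → ¬ IsCoboundary X R d c →
        ∃ σ0 ∈ dimFaces X d, ¬ IsCoboundary (component X d σ0) R d c) ∧
     (∀ c : Finset V → R, IsCocycle X R d c →
        (∀ σ0 ∈ dimFaces X d, IsCoboundary (component X d σ0) R d c) →
        IsCoboundary X R d c)) ∧
    -- (ii) a nonvanishing cup product restricts nonvanishing to some component
    (∀ p q : ℕ, p + q = d → ∀ a b : Finset V → R,
        IsCocycle X R p a → IsCocycle X R q b →
        ¬ IsCoboundary X R d (cup p q a b) →
        ∃ σ0 ∈ dimFaces X d, ¬ IsCoboundary (component X d σ0) R d (cup p q a b)) ∧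
    -- (iii) if `d` is the maximal dimension then the restriction map is also surjective
    ((∀ s ∈ X.faces, s.card ≤ d + 1) →
      ∀ g : Finset V → (Finset V → R),
        (∀ σ0 ∈ dimFaces X d, IsCocycle (component X d σ0) R d (g σ0)) →
        (∀ σ0 ∈ dimFaces X d, ∀ τ0 ∈ dimFaces X d,
          Relation.ReflTransGen (AdjRel X d) σ0 τ0 → g σ0 = g τ0) →
        ∃ c : Finset V → R, IsCocycle X R d c ∧
          ∀ σ0 ∈ dimFaces X d,
            IsCoboundary (component X d σ0) R d (fun s => c s - g σ0 s)) := by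
  refine ⟨⟨fun _ _ hc => exists_component_not_isCoboundary hc,
    fun _ _ hc => isCoboundary_of_forall_component hc⟩,
    fun _ _ _ _ _ _ _ hab => exists_component_not_isCoboundary hab,
    fun h_top g _ hg => ?_⟩
  obtain ⟨c, hc⟩ := exists_eq_on_components g hg
  exact ⟨c, isCocycle_of_forall_card_le h_top c, fun σ hσ =>
    isCoboundary_of_forall_eq_zero fun s hs => sub_eq_zero_of_eq (hc σ hσ s hs)⟩
end

section
/- Let k ≥ 1 be a natural number and let α_1, α_2, … be nonnegative real numbers. If Σ_{i=1}^{k+1} C(k+1,i)·α_i ≥ 1, then Σ_{i=1}^{2k+1} C(2k+3,i+1)·α_i ≥ 2k+3. Equivalently, it is impossible to have simultaneously S_1^k(α) ≥ 1 and S_2^{2k+1}(α) < 2k+3. -/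
/-!
With `m = k + 1` and any `l ≥ 2k + 1`, the inequality `(l + 2) S₁^k(α) ≤ S₂^l(α)` already holds
coefficientwise. By absorption, `(i + 1) C(n + 1, i + 1) = (n + 1) C(n, i)`, the comparison of
coefficients reduces to `(i + 1) C(m, i) ≤ C(n, i)` for `n ≥ 2m`. There Vandermonde's identity
splits `C(n, i)` into `i + 1` terms `C(m, a) C(n - m, b)` with `a + b = i`, each at least `C(m, i)`:
an `i`-subset is determined by its first `a` and its last `b` elements.
-/

open Finset MeasureTheory
open scoped ENNReal

lemma choose_add_le_choose_mul_choose (n a b : ℕ) :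
    n.choose (a + b) ≤ n.choose a * n.choose b :=
  calc n.choose (a + b)
      ≤ n.choose (a + b) * (a + b).choose a :=
        Nat.le_mul_of_pos_right _ (Nat.choose_pos (Nat.le_add_right a b))
    _ = n.choose a * (n - a).choose b := by
        rw [Nat.choose_mul (Nat.le_add_right a b), Nat.add_sub_cancel_left]
    _ ≤ n.choose a * n.choose b :=
        Nat.mul_le_mul_left _ (Nat.choose_le_choose b (Nat.sub_le n a))

lemma succ_mul_choose_le_choose_add {m n : ℕ} (hmn : m ≤ n) (i : ℕ) :
    (i + 1) * m.choose i ≤ (m + n).choose i := by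
  have term_ge : ∀ ab ∈ antidiagonal i, m.choose i ≤ m.choose ab.1 * n.choose ab.2 := by
    rintro ⟨a, b⟩ hab
    obtain rfl : a + b = i := mem_antidiagonal.mp hab
    exact (choose_add_le_choose_mul_choose m a b).trans
      (Nat.mul_le_mul_left _ (Nat.choose_le_choose b hmn))
  calc (i + 1) * m.choose i
      = #(antidiagonal i) • m.choose i := by rw [Nat.card_antidiagonal, smul_eq_mul]
    _ ≤ ∑ ab ∈ antidiagonal i, m.choose ab.1 * n.choose ab.2 :=
        card_nsmul_le_sum _ _ _ term_ge
    _ = (m + n).choose i := (Nat.add_choose_eq m n i).symm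

lemma succ_mul_choose_le_choose_succ_succ {m n : ℕ} (hmn : 2 * m ≤ n) (i : ℕ) :
    (n + 1) * m.choose i ≤ (n + 1).choose (i + 1) := by
  have choose_ge : (i + 1) * m.choose i ≤ n.choose i := by
    have h := succ_mul_choose_le_choose_add (m := m) (n := n - m) (by omega) i
    rwa [Nat.add_sub_of_le (by omega)] at h
  refine Nat.le_of_mul_le_mul_right ?_ i.succ_pos
  calc (n + 1) * m.choose i * (i + 1)
      = (n + 1) * ((i + 1) * m.choose i) := by ring
    _ ≤ (n + 1) * n.choose i := Nat.mul_le_mul_left _ choose_ge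
    _ = (n + 1).choose (i + 1) * (i + 1) := Nat.add_one_mul_choose_eq n i

section OrderedSemiring

variable {R : Type*} [Semiring R] [PartialOrder R] [IsOrderedRing R] {k l : ℕ} {α : ℕ → R}

lemma mul_sum_choose_mul_le_sum_choose_mul (hkl : 2 * k + 1 ≤ l)
    (hα : ∀ i ∈ Icc 1 l, 0 ≤ α i) :
    ((l + 2 : ℕ) : R) * ∑ i ∈ Icc 1 (k + 1), ((k + 1).choose i : R) * α i ≤
      ∑ i ∈ Icc 1 l, ((l + 2).choose (i + 1) : R) * α i := by
  have coeff_le (i : ℕ) : ((l + 2 : ℕ) : R) * (k + 1).choose i ≤ (l + 2).choose (i + 1) := by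
    rw [← Nat.cast_mul]
    exact Nat.mono_cast <|
      succ_mul_choose_le_choose_succ_succ (m := k + 1) (n := l + 1) (by omega) i
  have Icc_subset : Icc 1 (k + 1) ⊆ Icc 1 l := Icc_subset_Icc_right (by omega)
  calc ((l + 2 : ℕ) : R) * ∑ i ∈ Icc 1 (k + 1), ((k + 1).choose i : R) * α i
      = ∑ i ∈ Icc 1 (k + 1), (((l + 2 : ℕ) : R) * (k + 1).choose i) * α i := by
        simp only [mul_sum, mul_assoc]
    _ ≤ ∑ i ∈ Icc 1 (k + 1), ((l + 2).choose (i + 1) : R) * α i :=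
        sum_le_sum fun i hi => mul_le_mul_of_nonneg_right (coeff_le i) (hα i (Icc_subset hi))
    _ ≤ ∑ i ∈ Icc 1 l, ((l + 2).choose (i + 1) : R) * α i :=
        sum_le_sum_of_subset_of_nonneg Icc_subset fun i hi _ =>
          mul_nonneg (Nat.cast_nonneg _) (hα i hi)

theorem S1_ge_one_implies_S2_large_general (hkl : 2 * k + 1 ≤ l)
    (hα : ∀ i ∈ Icc 1 l, 0 ≤ α i)
    (h : 1 ≤ ∑ i ∈ Icc 1 (k + 1), ((k + 1).choose i : R) * α i) :
    ((l + 2 : ℕ) : R) ≤ ∑ i ∈ Icc 1 l, ((l + 2).choose (i + 1) : R) * α i :=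
  (le_mul_of_one_le_right (Nat.cast_nonneg _) h).trans
    (mul_sum_choose_mul_le_sum_choose_mul hkl hα)

end OrderedSemiring

/-- if `S1^k(α) ≥ 1` then `S2^{2k+1}(α) ≥ 2k+3`; one cannot have both
`S1^k(α) ≥ 1` and `S2^{2k+1}(α) < 2k+3`. -/
theorem S1_ge_one_implies_S2_large (k : ℕ) (hk : 1 ≤ k) (α : ℕ → ℝ) (hα : ∀ i, 0 ≤ α i)
    (h : 1 ≤ ∑ i ∈ Finset.Icc 1 (k + 1), ((k + 1).choose i : ℝ) * α i) :
    (2 * k + 3 : ℝ) ≤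
      ∑ i ∈ Finset.Icc 1 (2 * k + 1), ((2 * k + 3).choose (i + 1) : ℝ) * α i := by
  exact_mod_cast S1_ge_one_implies_S2_large_general (l := 2 * k + 1) le_rfl (fun i _ => hα i) h
end

section
/- For all natural numbers m, l, w with l ≥ 1 and 0 ≤ w ≤ m, one has m·(C(m,l) − C(m−w,l)) ≥ w·C(m,l). -/
open Finset MeasureTheory
open scoped ENNReal

-- The ratio `C(n, l) / C(n, j) = C(n - j, l - j) / C(l, j)` is nondecreasing in `n ≥ j`.
lemma choose_mul_choose_le_choose_mul_choose {j l k m : ℕ} (hjl : j ≤ l) (hkm : k ≤ m) :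
    m.choose j * k.choose l ≤ k.choose j * m.choose l := by
  have hmono : (k - j).choose (l - j) ≤ (m - j).choose (l - j) :=
    Nat.choose_le_choose _ (Nat.sub_le_sub_right hkm j)
  refine Nat.le_of_mul_le_mul_right ?_ (Nat.choose_pos hjl)
  calc m.choose j * k.choose l * l.choose j
      = m.choose j * (k.choose j * (k - j).choose (l - j)) := by
        rw [mul_assoc, Nat.choose_mul hjl]
    _ ≤ m.choose j * (k.choose j * (m - j).choose (l - j)) := by
        gcongr
    _ = k.choose j * (m.choose j * (m - j).choose (l - j)) := mul_left_comm _ _ _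
    _ = k.choose j * m.choose l * l.choose j := by
        rw [mul_assoc, Nat.choose_mul hjl]

lemma mul_choose_le_mul_choose {k l m : ℕ} (hl : 1 ≤ l) (hkm : k ≤ m) :
    m * k.choose l ≤ k * m.choose l := by
  simpa only [Nat.choose_one_right] using choose_mul_choose_le_choose_mul_choose hl hkm

/-- for `l ≥ 1` and `w ≤ m`, `m·(C(m,l) − C(m−w,l)) ≥ w·C(m,l)`. -/
theorem simplices_added_binomial_ineq (m l w : ℕ) (hl : 1 ≤ l) (hw : w ≤ m) :
    w * m.choose l ≤ m * (m.choose l - (m - w).choose l) := by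
  have hratio : m * (m - w).choose l ≤ (m - w) * m.choose l :=
    mul_choose_le_mul_choose hl (Nat.sub_le m w)
  calc w * m.choose l
      = m * m.choose l - (m - w) * m.choose l := by rw [← Nat.sub_mul, Nat.sub_sub_self hw]
    _ ≤ m * m.choose l - m * (m - w).choose l := Nat.sub_le_sub_left hratio _
    _ = m * (m.choose l - (m - w).choose l) := (Nat.mul_sub ..).symm
end

section
/- Let k ≥ 2 be a natural number and let α_1, α_2, … be nonnegative real numbers with Σ_{i=1}^{k+1} C(k+1,i)·α_i ≥ 1. Then Σ_{i=1}^{2k} C(2k+1,i+1)·α_i ≥ k(2k+1)/(k+1) = 2k − 1 + 1/(k+1). (Hence a strongly connected 2k-dimensional component in the lower model starts with an initial budget of expected top faces less than n^{2 − 1/(k+1)}.) -/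
open Finset MeasureTheory
open scoped ENNReal

/-!
The bound holds termwise. For `2 ≤ m` the ratio `n.choose (i + 1) / m.choose i` is nondecreasing on
`1 ≤ i ≤ m` as soon as it does not drop from `i = 1` to `i = 2`, which means `3 * m + 1 ≤ 2 * n`. It
is therefore at least its value `n.choose 2 / m` at `i = 1`. For `m = k + 1` and `n = 2 * k + 1` the
condition reads `2 ≤ k`, and the value at `i = 1` is `k * (2 * k + 1) / (k + 1)`.
-/

theorem choose_succ_mul_choose_le {m n i j : ℕ} (h : (m - i) * (j + 1) ≤ (n - j) * (i + 1)) :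
    m.choose (i + 1) * n.choose j ≤ m.choose i * n.choose (j + 1) := by
  refine Nat.le_of_mul_le_mul_right ?_ (by positivity : 0 < (i + 1) * (j + 1))
  calc m.choose (i + 1) * n.choose j * ((i + 1) * (j + 1))
      = m.choose (i + 1) * (i + 1) * n.choose j * (j + 1) := by ring
    _ = m.choose i * n.choose j * ((m - i) * (j + 1)) := by
      rw [Nat.choose_succ_right_eq]; ring
    _ ≤ m.choose i * n.choose j * ((n - j) * (i + 1)) := Nat.mul_le_mul_left _ h
    _ = m.choose i * (n.choose (j + 1) * (j + 1)) * (i + 1) := by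
      rw [Nat.choose_succ_right_eq]; ring
    _ = m.choose i * n.choose (j + 1) * ((i + 1) * (j + 1)) := by ring

theorem sub_mul_add_two_le {m n i : ℕ} (hmn : 3 * m + 1 ≤ 2 * n) (hi : 1 ≤ i) :
    (m - i) * (i + 2) ≤ (n - (i + 1)) * (i + 1) := by
  obtain hmi | him := le_total m i
  · simp [Nat.sub_eq_zero_of_le hmi]
  · obtain ⟨a, rfl⟩ := Nat.exists_eq_add_of_le him
    obtain ⟨b, rfl⟩ := Nat.exists_eq_add_of_le (by omega : i + 1 ≤ n)
    rw [Nat.add_sub_cancel_left, Nat.add_sub_cancel_left]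
    have hab : 3 * a ≤ 2 * b := by omega
    have hii : 2 * (i + 2) ≤ 3 * (i + 1) := by omega
    refine Nat.le_of_mul_le_mul_left ?_ two_pos
    calc 2 * (a * (i + 2)) = a * (2 * (i + 2)) := Nat.mul_left_comm _ _ _
      _ ≤ a * (3 * (i + 1)) := Nat.mul_le_mul_left _ hii
      _ = 3 * a * (i + 1) := by ring
      _ ≤ 2 * b * (i + 1) := Nat.mul_le_mul_right _ hab
      _ = 2 * (b * (i + 1)) := Nat.mul_assoc _ _ _

theorem choose_two_mul_choose_le {m n i : ℕ} (hmn : 3 * m + 1 ≤ 2 * n) (hi : 1 ≤ i) :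
    n.choose 2 * m.choose i ≤ m * n.choose (i + 1) := by
  induction i, hi using Nat.le_induction with
  | base => rw [Nat.choose_one_right, mul_comm]
  | succ i hi ih =>
    obtain hni | hin := lt_or_ge n (i + 1)
    · simp [Nat.choose_eq_zero_of_lt (by omega : m < i + 1)]
    refine Nat.le_of_mul_le_mul_right ?_ (Nat.choose_pos hin)
    calc n.choose 2 * m.choose (i + 1) * n.choose (i + 1)
        = n.choose 2 * (m.choose (i + 1) * n.choose (i + 1)) := mul_assoc _ _ _
      _ ≤ n.choose 2 * (m.choose i * n.choose (i + 2)) :=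
        Nat.mul_le_mul_left _ (choose_succ_mul_choose_le (sub_mul_add_two_le hmn hi))
      _ = n.choose 2 * m.choose i * n.choose (i + 2) := (mul_assoc _ _ _).symm
      _ ≤ m * n.choose (i + 1) * n.choose (i + 2) := Nat.mul_le_mul_right _ ih
      _ = m * n.choose (i + 2) * n.choose (i + 1) := mul_right_comm _ _ _

theorem two_mul_add_one_choose_two (k : ℕ) : (2 * k + 1).choose 2 = k * (2 * k + 1) := by
  rw [Nat.choose_two_right, Nat.add_sub_cancel, Nat.mul_left_comm,
    Nat.mul_div_cancel_left _ two_pos, Nat.mul_comm]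

theorem choose_two_mul_sum_choose_mul_le {R : Type*} [Semiring R] [PartialOrder R]
    [IsOrderedRing R] {m n : ℕ} (hmn : 3 * m + 1 ≤ 2 * n) {α : ℕ → R}
    (hα : ∀ i ∈ Icc 1 (n - 1), 0 ≤ α i) :
    (n.choose 2 : R) * ∑ i ∈ Icc 1 m, (m.choose i : R) * α i ≤
      m * ∑ i ∈ Icc 1 (n - 1), (n.choose (i + 1) : R) * α i := by
  have hsub : Icc 1 m ⊆ Icc 1 (n - 1) := Icc_subset_Icc_right (by omega)
  simp only [mul_sum, ← mul_assoc, ← Nat.cast_mul]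
  calc ∑ i ∈ Icc 1 m, ((n.choose 2 * m.choose i : ℕ) : R) * α i
      ≤ ∑ i ∈ Icc 1 m, ((m * n.choose (i + 1) : ℕ) : R) * α i :=
        sum_le_sum fun i hi => mul_le_mul_of_nonneg_right
          (Nat.mono_cast (choose_two_mul_choose_le hmn (mem_Icc.mp hi).1)) (hα i (hsub hi))
    _ ≤ ∑ i ∈ Icc 1 (n - 1), ((m * n.choose (i + 1) : ℕ) : R) * α i :=
        sum_le_sum_of_subset_of_nonneg hsub fun i hi _ =>
          mul_nonneg (Nat.cast_nonneg _) (hα i hi)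

theorem initial_budget_bound_general {K : Type*} [Field K] [LinearOrder K] [IsStrictOrderedRing K]
    {m n : ℕ} (hmn : 3 * m + 1 ≤ 2 * n) {α : ℕ → K} (hα : ∀ i ∈ Icc 1 (n - 1), 0 ≤ α i)
    (h : 1 ≤ ∑ i ∈ Icc 1 m, (m.choose i : K) * α i) :
    (n.choose 2 : K) / m ≤ ∑ i ∈ Icc 1 (n - 1), (n.choose (i + 1) : K) * α i := by
  have hm : (0 : K) < m := by
    rw [Nat.cast_pos, Nat.pos_iff_ne_zero]
    rintro rfl
    simp [zero_lt_one.not_ge] at h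
  rw [div_le_iff₀' hm]
  exact (le_mul_of_one_le_right (Nat.cast_nonneg _) h).trans
    (choose_two_mul_sum_choose_mul_le hmn hα)

/-- for `k ≥ 2`, `S1^k(α) ≥ 1` implies
`Σ_{i=1}^{2k} C(2k+1,i+1) α_i ≥ k(2k+1)/(k+1)`. -/
theorem initial_budget_bound (k : ℕ) (hk : 2 ≤ k) (α : ℕ → ℝ) (hα : ∀ i, 0 ≤ α i)
    (h : 1 ≤ ∑ i ∈ Finset.Icc 1 (k + 1), ((k + 1).choose i : ℝ) * α i) :
    ((k : ℝ) * (2 * k + 1)) / (k + 1) ≤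
      ∑ i ∈ Finset.Icc 1 (2 * k), ((2 * k + 1).choose (i + 1) : ℝ) * α i := by
  simpa [two_mul_add_one_choose_two] using
    initial_budget_bound_general (m := k + 1) (n := 2 * k + 1) (by omega) (fun i _ => hα i) h
end

section
/- Let k ≥ 1 be a natural number and let α_1, α_2, … be nonnegative real numbers with Σ_{i=1}^{k+1} C(k+1,i)·α_i ≥ 1. Then Σ_{i=1}^{2k} C(2k,i)·α_i ≥ 2k/(k+1) = 2 − 2/(k+1). (Hence in the lower model, adding a vertex to a strongly connected 2k-dimensional component costs at least n^{2/(k+1) − 1} in expectation.) -/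
/-!
For `i ≥ 1` the ratio `C(n, i) / n = C(n - 1, i - 1) / i` is nondecreasing in `n`. Hence so is
`(∑ i ∈ Icc 1 n, C(n, i) * α i) / n` for nonnegative `α`: each summand grows, and the new summands
are nonnegative. The bound compares the values at `k + 1 ≤ 2 * k`.
-/

open Finset MeasureTheory
open scoped ENNReal

lemma mul_choose_le_mul_choose_s16 {m n i : ℕ} (hmn : m ≤ n) (hi : i ≠ 0) :
    n * m.choose i ≤ m * n.choose i := by
  obtain ⟨j, rfl⟩ := Nat.exists_eq_succ_of_ne_zero hi
  rcases m with _ | m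
  · simp
  obtain ⟨n, rfl⟩ := Nat.exists_eq_succ_of_ne_zero (Nat.ne_zero_of_lt hmn)
  refine Nat.le_of_mul_le_mul_right ?_ j.succ_pos
  calc (n + 1) * (m + 1).choose (j + 1) * (j + 1)
      = (n + 1) * ((m + 1) * m.choose j) := by rw [mul_assoc, ← Nat.add_one_mul_choose_eq]
    _ ≤ (n + 1) * ((m + 1) * n.choose j) := by
        gcongr
        exact Nat.le_of_succ_le_succ hmn
    _ = (m + 1) * ((n + 1) * n.choose j) := mul_left_comm _ _ _
    _ = (m + 1) * (n + 1).choose (j + 1) * (j + 1) := by rw [Nat.add_one_mul_choose_eq, mul_assoc]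

lemma mul_sum_choose_mul_le {R : Type*} [Semiring R] [PartialOrder R] [IsOrderedRing R]
    {m n : ℕ} (hmn : m ≤ n) {α : ℕ → R} (hα : ∀ i ∈ Icc 1 n, 0 ≤ α i) :
    n * ∑ i ∈ Icc 1 m, (m.choose i : R) * α i ≤ m * ∑ i ∈ Icc 1 n, (n.choose i : R) * α i := by
  have hsub : Icc 1 m ⊆ Icc 1 n := Icc_subset_Icc_right hmn
  have choose_le : ∀ i ∈ Icc 1 m, (n * m.choose i : R) ≤ m * n.choose i := by
    intro i hi
    have hi0 : i ≠ 0 := Nat.one_le_iff_ne_zero.mp (mem_Icc.mp hi).1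
    simpa only [Nat.cast_mul] using Nat.mono_cast (α := R) (mul_choose_le_mul_choose_s16 hmn hi0)
  calc n * ∑ i ∈ Icc 1 m, (m.choose i : R) * α i
      = ∑ i ∈ Icc 1 m, (n * m.choose i : R) * α i := by simp only [mul_sum, mul_assoc]
    _ ≤ ∑ i ∈ Icc 1 m, (m * n.choose i : R) * α i :=
        sum_le_sum fun i hi ↦ mul_le_mul_of_nonneg_right (choose_le i hi) (hα i (hsub hi))
    _ = m * ∑ i ∈ Icc 1 m, (n.choose i : R) * α i := by simp only [mul_sum, mul_assoc]
    _ ≤ m * ∑ i ∈ Icc 1 n, (n.choose i : R) * α i := by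
        gcongr
        exact fun i hi _ ↦ mul_nonneg (Nat.cast_nonneg _) (hα i hi)

theorem vertex_addition_cost_bound_general {K : Type*} [Semifield K] [LinearOrder K]
    [IsStrictOrderedRing K] {m n : ℕ} (hmn : m ≤ n) {α : ℕ → K} (hα : ∀ i ∈ Icc 1 n, 0 ≤ α i)
    (h : 1 ≤ ∑ i ∈ Icc 1 m, (m.choose i : K) * α i) :
    (n / m : K) ≤ ∑ i ∈ Icc 1 n, (n.choose i : K) * α i := by
  have hm : 0 < m := by
    rw [Nat.pos_iff_ne_zero]
    rintro rfl
    simp [zero_lt_one.not_ge] at h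
  rw [div_le_iff₀' (Nat.cast_pos.mpr hm)]
  calc (n : K) ≤ n * ∑ i ∈ Icc 1 m, (m.choose i : K) * α i :=
        le_mul_of_one_le_right n.cast_nonneg h
    _ ≤ m * ∑ i ∈ Icc 1 n, (n.choose i : K) * α i := mul_sum_choose_mul_le hmn hα

/-- for `k ≥ 1`, `S1^k(α) ≥ 1` implies
`Σ_{i=1}^{2k} C(2k,i) α_i ≥ 2k/(k+1)`. -/
theorem vertex_addition_cost_bound (k : ℕ) (hk : 1 ≤ k) (α : ℕ → ℝ) (hα : ∀ i, 0 ≤ α i)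
    (h : 1 ≤ ∑ i ∈ Finset.Icc 1 (k + 1), ((k + 1).choose i : ℝ) * α i) :
    (2 * k : ℝ) / (k + 1) ≤
      ∑ i ∈ Finset.Icc 1 (2 * k), ((2 * k).choose i : ℝ) * α i := by
  simpa using vertex_addition_cost_bound_general (by lia : k + 1 ≤ 2 * k) (fun i _ ↦ hα i) h
end

section
/- Fix D ∈ ℕ and parameters α_1,…,α_D ≥ 0, set p_i = n^{−α_i} for i ≤ D and p_i = 0 for i > D, and let k ≤ D. Set γ_k = max_{k ≤ i ≤ D} (i+1−α_i) and assume γ_k < k+1. Then in the upper multiparametric model X̄(n; α_1,…,α_D), the expected number of k-dimensional faces of X̄ is Θ(n^{γ_k}) as n → ∞; equivalently, for a fixed (k+1)-element subset s of {1,…,n}, the probability that s is a face of X̄ is Θ(n^{γ_k − (k+1)}). -/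
/-!
A set `s` of `k + 1 ≥ 2` vertices is a face exactly when some `t ⊇ s` is selected. These events are
independent, so with `M` the mean number of selected supersets of `s`, the union bound and
`∏ (1 - x_t) ≤ exp (-∑ x_t)` squeeze the face probability between `min 1 M / 2` and `min 1 M`.
There are `(n - (k + 1)).choose (i - k)` supersets of size `i + 1`, each selected with probability
`n ^ (-α i)`, hence `M = Θ(n ^ (γ - (k + 1)))`. Summing over the `n.choose (k + 1)` sets `s`, the
expected number of `k`-faces is `Θ(n ^ min γ (k + 1))`.
-/

open Finset MeasureTheory
open scoped ENNReal

open Asymptotics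

section AsymptoticComparison

open Filter

lemma isBigO_min {ι : Type*} {l : Filter ι} {f₁ f₂ g₁ g₂ : ι → ℝ} (hf₁ : 0 ≤ f₁) (hf₂ : 0 ≤ f₂)
    (hg₁ : 0 ≤ g₁) (hg₂ : 0 ≤ g₂) (h₁ : f₁ =O[l] g₁) (h₂ : f₂ =O[l] g₂) :
    (fun x => min (f₁ x) (f₂ x)) =O[l] fun x => min (g₁ x) (g₂ x) := by
  obtain ⟨C₁, hC₁⟩ := h₁.bound
  obtain ⟨C₂, hC₂⟩ := h₂.bound
  refine IsBigO.of_bound (max C₁ C₂) ?_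
  filter_upwards [hC₁, hC₂] with x hx₁ hx₂
  rw [Real.norm_of_nonneg (hf₁ x), Real.norm_of_nonneg (hg₁ x)] at hx₁
  rw [Real.norm_of_nonneg (hf₂ x), Real.norm_of_nonneg (hg₂ x)] at hx₂
  rw [Real.norm_of_nonneg (le_min (hf₁ x) (hf₂ x)), Real.norm_of_nonneg (le_min (hg₁ x) (hg₂ x))]
  rcases min_choice (g₁ x) (g₂ x) with h | h <;> rw [h]
  · exact (min_le_left _ _).trans
      (hx₁.trans (mul_le_mul_of_nonneg_right (le_max_left _ _) (hg₁ x)))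
  · exact (min_le_right _ _).trans
      (hx₂.trans (mul_le_mul_of_nonneg_right (le_max_right _ _) (hg₂ x)))

lemma isTheta_min {ι : Type*} {l : Filter ι} {f₁ f₂ g₁ g₂ : ι → ℝ} (hf₁ : 0 ≤ f₁) (hf₂ : 0 ≤ f₂)
    (hg₁ : 0 ≤ g₁) (hg₂ : 0 ≤ g₂) (h₁ : f₁ =Θ[l] g₁) (h₂ : f₂ =Θ[l] g₂) :
    (fun x => min (f₁ x) (f₂ x)) =Θ[l] fun x => min (g₁ x) (g₂ x) :=
  ⟨isBigO_min hf₁ hf₂ hg₁ hg₂ h₁.1 h₂.1, isBigO_min hg₁ hg₂ hf₁ hf₂ h₁.2 h₂.2⟩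

lemma isTheta_sum_rpow_sup' {ι : Type*} {s : Finset ι} (hs : s.Nonempty) {β : ι → ℝ}
    {f : ι → ℕ → ℝ} (hf₀ : ∀ i ∈ s, 0 ≤ f i)
    (hf : ∀ i ∈ s, f i =Θ[atTop] fun n => (n : ℝ) ^ β i) :
    (fun n => ∑ i ∈ s, f i n) =Θ[atTop] fun n => (n : ℝ) ^ s.sup' hs β := by
  refine ⟨IsBigO.fun_sum fun i hi => (hf i hi).1.trans (.of_bound' ?_), ?_⟩
  · filter_upwards [eventually_ge_atTop 1] with n hn
    rw [Real.norm_of_nonneg (by positivity), Real.norm_of_nonneg (by positivity)]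
    exact Real.rpow_le_rpow_of_exponent_le (mod_cast hn) (le_sup' β hi)
  · obtain ⟨i, hi, hmax⟩ := exists_mem_eq_sup' hs β
    rw [hmax]
    refine (hf i hi).2.trans (isBigO_of_le _ fun n => ?_)
    rw [Real.norm_of_nonneg (hf₀ i hi n),
      Real.norm_of_nonneg (sum_nonneg fun j hj => hf₀ j hj n)]
    exact single_le_sum (f := fun j => f j n) (fun j hj => hf₀ j hj n) hi

lemma isTheta_natCast_sub (m : ℕ) :
    (fun n : ℕ => ((n - m : ℕ) : ℝ)) =Θ[atTop] fun n => (n : ℝ) := by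
  refine ⟨isBigO_of_le _ fun n => ?_, IsBigO.of_bound 2 ?_⟩
  · simp only [Real.norm_natCast, Nat.cast_le, Nat.sub_le]
  · filter_upwards [eventually_ge_atTop (2 * m)] with n hn
    simp only [Real.norm_natCast]
    exact_mod_cast (by lia : n ≤ 2 * (n - m))

lemma isTheta_choose_sub (m j : ℕ) :
    (fun n => ((n - m).choose j : ℝ)) =Θ[atTop] fun n => (n : ℝ) ^ j :=
  have h : (fun n => ((n - m).choose j : ℝ)) =Θ[atTop] fun n => ((n - m : ℕ) : ℝ) ^ j :=
    ⟨(isTheta_choose j).1.comp_tendsto (tendsto_sub_atTop_nat m),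
      (isTheta_choose j).2.comp_tendsto (tendsto_sub_atTop_nat m)⟩
  h.trans ((isTheta_natCast_sub m).pow j)

lemma rpow_mul_min_one_rpow {x : ℝ} (hx : 1 ≤ x) (a b : ℝ) :
    x ^ a * min 1 (x ^ b) = x ^ min (b + a) a := by
  have hx₀ : 0 < x := by positivity
  rw [mul_min_of_nonneg _ _ (Real.rpow_nonneg hx₀.le a), mul_one, ← Real.rpow_add hx₀,
    (Real.monotone_rpow_of_base_ge_one hx).map_min, min_comm, add_comm]

end AsymptoticComparison

section IndependentEvents

open ProbabilityTheory

lemma min_one_div_two_le_one_sub_exp_neg {x : ℝ} (hx : 0 ≤ x) :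
    min 1 x / 2 ≤ 1 - Real.exp (-x) := by
  have hexp : Real.exp (-x) * (1 + x) ≤ 1 := by
    rw [Real.exp_neg, inv_mul_le_one₀ (Real.exp_pos x), add_comm]
    exact Real.add_one_le_exp x
  rcases min_cases 1 x with ⟨h, h1⟩ | ⟨h, h1⟩ <;> rw [h] <;> nlinarith

variable {Ω ι : Type*} [MeasurableSpace Ω] {μ : Measure Ω}

lemma measureReal_biUnion_le_min_one_sum [IsProbabilityMeasure μ] (A : ι → Set Ω)
    (T : Finset ι) : μ.real (⋃ i ∈ T, A i) ≤ min 1 (∑ i ∈ T, μ.real (A i)) :=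
  le_min measureReal_le_one (measureReal_biUnion_finset_le T A)

variable {A : ι → Set Ω}

lemma measureReal_biInter_compl_of_iIndepSet (hA : ∀ i, MeasurableSet (A i))
    (h : iIndepSet A μ) (T : Finset ι) :
    μ.real (⋂ i ∈ T, (A i)ᶜ) = ∏ i ∈ T, (1 - μ.real (A i)) := by
  have := h.isProbabilityMeasure
  have hinter : μ (⋂ i ∈ T, (A i)ᶜ) = ∏ i ∈ T, μ (A i)ᶜ :=
    ((iIndepSet_iff_iIndep A μ).1 h).meas_biInter fun i _ =>
      (MeasurableSpace.measurableSet_generateFrom (Set.mem_singleton (A i))).compl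
  rw [Measure.real, hinter, ENNReal.toReal_prod]
  exact prod_congr rfl fun i _ => probReal_compl_eq_one_sub (hA i)

lemma min_one_sum_div_two_le_measureReal_biUnion (hA : ∀ i, MeasurableSet (A i))
    (h : iIndepSet A μ) (T : Finset ι) :
    min 1 (∑ i ∈ T, μ.real (A i)) / 2 ≤ μ.real (⋃ i ∈ T, A i) := by
  have := h.isProbabilityMeasure
  calc min 1 (∑ i ∈ T, μ.real (A i)) / 2
      ≤ 1 - Real.exp (-∑ i ∈ T, μ.real (A i)) :=
        min_one_div_two_le_one_sub_exp_neg (sum_nonneg fun _ _ => measureReal_nonneg)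
    _ ≤ 1 - ∏ i ∈ T, (1 - μ.real (A i)) := by
        rw [← sum_neg_distrib, Real.exp_sum]
        exact sub_le_sub_left (prod_le_prod (fun _ _ => sub_nonneg.2 measureReal_le_one)
          fun _ _ => Real.one_sub_le_exp_neg _) 1
    _ = μ.real (⋃ i ∈ T, A i) := by
        rw [← measureReal_biInter_compl_of_iIndepSet hA h T, ← Set.compl_iUnion₂,
          probReal_compl_eq_one_sub (T.measurableSet_biUnion fun i _ => hA i), sub_sub_cancel]

end IndependentEvents

lemma sum_Ici_apply_card {V M : Type*} [Fintype V] [DecidableEq V] [AddCommMonoid M]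
    (s : Finset V) (f : ℕ → M) :
    ∑ t ∈ Ici s, f #t = ∑ j ∈ range (#sᶜ + 1), (#sᶜ).choose j • f (#s + j) := by
  rw [← sum_powerset_apply_card fun j => f (#s + j)]
  have hdisj {t : Finset V} (ht : t ∈ sᶜ.powerset) : Disjoint s t :=
    disjoint_compl_right.mono_right (mem_powerset.1 ht)
  refine sum_nbij' (· \ s) (s ∪ ·) (fun t _ => ?_) (fun t _ => ?_) (fun t ht => ?_)
    (fun t ht => ?_) (fun t ht => ?_)
  · exact mem_powerset.2 (sdiff_subset_sdiff (subset_univ t) le_rfl)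
  · exact mem_Ici.2 subset_union_left
  · exact union_sdiff_of_subset (mem_Ici.1 ht)
  · exact union_sdiff_cancel_left (hdisj ht)
  · rw [add_comm, card_sdiff_add_card_eq_card (mem_Ici.1 ht)]

section Selection

lemma isProbabilityMeasure_bernoulliMeasure {p : ℝ≥0∞} (hp : p ≤ 1) :
    IsProbabilityMeasure (bernoulliMeasure p) := by
  constructor
  simp [bernoulliMeasure, add_tsub_cancel_of_le hp]

lemma bernoulliMeasure_singleton_true (p : ℝ≥0∞) : bernoulliMeasure p {true} = p := by
  simp [bernoulliMeasure]

variable {n : ℕ} {p : ℕ → ℝ≥0∞}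

lemma isProbabilityMeasure_selectionMeasure (hp : ∀ i, p i ≤ 1) :
    IsProbabilityMeasure (selectionMeasure n p) := by
  have (s : Finset (Fin n)) := isProbabilityMeasure_bernoulliMeasure (hp (#s - 1))
  unfold selectionMeasure
  infer_instance

lemma selectionMeasure_real_selected (hp : ∀ i, p i ≤ 1) (t : Finset (Fin n)) :
    (selectionMeasure n p).real {ω | ω t = true} = (p (#t - 1)).toReal := by
  have (s : Finset (Fin n)) := isProbabilityMeasure_bernoulliMeasure (hp (#s - 1))
  have h := (measurePreserving_eval (fun s : Finset (Fin n) => bernoulliMeasure (p (#s - 1)))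
    t).measure_preimage (MeasurableSet.singleton true).nullMeasurableSet
  exact congrArg ENNReal.toReal (h.trans (bernoulliMeasure_singleton_true _))

lemma iIndepSet_selected (hp : ∀ i, p i ≤ 1) :
    ProbabilityTheory.iIndepSet (fun t : Finset (Fin n) => {ω | ω t = true})
      (selectionMeasure n p) := by
  have (s : Finset (Fin n)) := isProbabilityMeasure_bernoulliMeasure (hp (#s - 1))
  have hcoord : ProbabilityTheory.iIndepFun (fun (t : Finset (Fin n)) ω => ω t)
      (selectionMeasure n p) :=
    ProbabilityTheory.iIndepFun_pi (X := fun _ b => b) fun _ => aemeasurable_id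
  exact (ProbabilityTheory.iIndepSet_iff_meas_biInter fun _ => .of_discrete).2
    fun T => hcoord.measure_inter_preimage_eq_mul T fun _ _ => .singleton true

end Selection

section UpperComplex

/-- The mean number of selected sets that contain a fixed set of `k + 1` of the `n` vertices, when
sets with `i + 1` elements are selected with probability `p i`. -/
noncomputable def meanSelectedSupersets (n : ℕ) (p : ℕ → ℝ≥0∞) (k : ℕ) : ℝ :=
  ∑ i ∈ Ico k n, ((n - (k + 1)).choose (i - k) : ℝ) * (p i).toReal

/-- The expected number of `k`-dimensional faces of the upper complex on `n` vertices, when sets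
with `i + 1` elements are selected independently with probability `p i`. -/
noncomputable def expectedFaces (n : ℕ) (p : ℕ → ℝ≥0∞) (k : ℕ) : ℝ :=
  (∫⁻ ω, (#(dimFaces (upperComplex n ω) k) : ℝ≥0∞) ∂selectionMeasure n p).toReal

lemma setOf_mem_faces_upperComplex_eq {n : ℕ} {s : Finset (Fin n)} (hs : 2 ≤ #s) :
    {ω | s ∈ (upperComplex n ω).faces} = ⋃ t ∈ Ici s, {ω | ω t = true} := by
  ext ω
  simp only [upperComplex, mem_filter, mem_univ, true_and, Set.mem_ofPred_eq, Set.mem_iUnion,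
    mem_Ici, exists_prop]
  refine ⟨fun h => ?_, fun ⟨t, hst, ht⟩ => .inr ⟨t, hst, hs.trans (card_le_card hst), ht⟩⟩
  obtain ⟨t, hst, -, ht⟩ := h.resolve_left (by lia)
  exact ⟨t, hst, ht⟩

lemma sum_Ici_eq_meanSelectedSupersets {n k : ℕ} {s : Finset (Fin n)} (hs : #s = k + 1)
    (p : ℕ → ℝ≥0∞) :
    ∑ t ∈ Ici s, (p (#t - 1)).toReal = meanSelectedSupersets n p k := by
  have hk : n - (k + 1) + 1 = n - k := by
    have := hs ▸ card_le_univ s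
    rw [Fintype.card_fin] at this
    lia
  rw [sum_Ici_apply_card s fun j => (p (j - 1)).toReal, meanSelectedSupersets,
    sum_Ico_eq_sum_range, card_compl, Fintype.card_fin, hs, hk]
  refine sum_congr rfl fun j _ => ?_
  rw [nsmul_eq_mul, Nat.add_sub_cancel_left, show k + 1 + j - 1 = k + j by lia]

variable {n k : ℕ} {p : ℕ → ℝ≥0∞} {s : Finset (Fin n)}

lemma measureReal_mem_faces_le (hp : ∀ i, p i ≤ 1) (hk : 1 ≤ k) (hs : #s = k + 1) :
    (selectionMeasure n p).real {ω | s ∈ (upperComplex n ω).faces}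
      ≤ min 1 (meanSelectedSupersets n p k) := by
  have := isProbabilityMeasure_selectionMeasure (n := n) hp
  simp only [setOf_mem_faces_upperComplex_eq (s := s) (by lia),
    ← sum_Ici_eq_meanSelectedSupersets hs p, ← selectionMeasure_real_selected hp]
  exact measureReal_biUnion_le_min_one_sum _ _

lemma le_measureReal_mem_faces (hp : ∀ i, p i ≤ 1) (hk : 1 ≤ k) (hs : #s = k + 1) :
    min 1 (meanSelectedSupersets n p k) / 2
      ≤ (selectionMeasure n p).real {ω | s ∈ (upperComplex n ω).faces} := by
  simp only [setOf_mem_faces_upperComplex_eq (s := s) (by lia),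
    ← sum_Ici_eq_meanSelectedSupersets hs p, ← selectionMeasure_real_selected hp]
  exact min_one_sum_div_two_le_measureReal_biUnion (fun _ => .of_discrete)
    (iIndepSet_selected hp) _

lemma expectedFaces_eq_sum (hp : ∀ i, p i ≤ 1) (k : ℕ) :
    expectedFaces n p k = ∑ s ∈ powersetCard (k + 1) univ,
      (selectionMeasure n p).real {ω | s ∈ (upperComplex n ω).faces} := by
  classical
  have := isProbabilityMeasure_selectionMeasure (n := n) hp
  have hcard (ω : Finset (Fin n) → Bool) : (#(dimFaces (upperComplex n ω) k) : ℝ≥0∞)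
      = ∑ s ∈ powersetCard (k + 1) univ,
          Set.indicator {ω | s ∈ (upperComplex n ω).faces} 1 ω := by
    simp only [Set.indicator_apply, Set.mem_ofPred_eq, Pi.one_apply]
    rw [sum_boole]
    congr 2
    ext s
    simp [dimFaces, and_comm]
  simp_rw [expectedFaces, hcard]
  rw [lintegral_finsetSum _ fun s _ => Measurable.of_discrete]
  simp_rw [lintegral_indicator_one MeasurableSet.of_discrete]
  exact ENNReal.toReal_sum fun s _ => measure_ne_top _ _

lemma expectedFaces_le (hp : ∀ i, p i ≤ 1) (hk : 1 ≤ k) :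
    expectedFaces n p k ≤ (n.choose (k + 1) : ℝ) * min 1 (meanSelectedSupersets n p k) := by
  rw [expectedFaces_eq_sum hp]
  refine (sum_le_card_nsmul _ _ _ fun s hs =>
    measureReal_mem_faces_le hp hk (mem_powersetCard.1 hs).2).trans_eq ?_
  rw [card_powersetCard, card_fin, nsmul_eq_mul]

lemma le_expectedFaces (hp : ∀ i, p i ≤ 1) (hk : 1 ≤ k) :
    (n.choose (k + 1) : ℝ) * (min 1 (meanSelectedSupersets n p k) / 2) ≤ expectedFaces n p k := by
  rw [expectedFaces_eq_sum hp]
  refine Eq.trans_le ?_ (card_nsmul_le_sum _ _ _ fun s hs =>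
    le_measureReal_mem_faces hp hk (mem_powersetCard.1 hs).2)
  rw [card_powersetCard, card_fin, nsmul_eq_mul]

lemma meanSelectedSupersets_nonneg (n : ℕ) (p : ℕ → ℝ≥0∞) (k : ℕ) :
    0 ≤ meanSelectedSupersets n p k := by
  unfold meanSelectedSupersets
  positivity

lemma expectedFaces_nonneg (n : ℕ) (p : ℕ → ℝ≥0∞) (k : ℕ) : 0 ≤ expectedFaces n p k :=
  ENNReal.toReal_nonneg

lemma isTheta_expectedFaces {ι : Type*} {l : Filter ι} {n : ι → ℕ} {p : ι → ℕ → ℝ≥0∞}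
    (hp : ∀ x i, p x i ≤ 1) (hk : 1 ≤ k) :
    (fun x => expectedFaces (n x) (p x) k)
      =Θ[l] fun x => ((n x).choose (k + 1) : ℝ) * min 1 (meanSelectedSupersets (n x) (p x) k) := by
  have hnonneg (x : ι) :
      0 ≤ ((n x).choose (k + 1) : ℝ) * min 1 (meanSelectedSupersets (n x) (p x) k) :=
    mul_nonneg (Nat.cast_nonneg _) (le_min zero_le_one (meanSelectedSupersets_nonneg _ _ _))
  refine ⟨isBigO_of_le _ fun x => ?_, .of_bound 2 (.of_forall fun x => ?_)⟩ <;>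
    rw [Real.norm_of_nonneg (expectedFaces_nonneg _ _ _), Real.norm_of_nonneg (hnonneg x)]
  · exact expectedFaces_le (hp x) hk
  · linarith [le_expectedFaces (n := n x) (hp x) hk]

end UpperComplex

section PowerLaw

open Filter

variable {D : ℕ} {α : ℕ → ℝ}

lemma upperP_le_one (hα : ∀ i ≤ D, 0 ≤ α i) (n i : ℕ) : upperP D α n i ≤ 1 := by
  unfold upperP
  split_ifs with hi
  · rw [ENNReal.ofReal_le_one]
    rcases n.eq_zero_or_pos with rfl | hn
    · rw [Nat.cast_zero]
      exact Real.zero_rpow_le_one _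
    · exact Real.rpow_le_one_of_one_le_of_nonpos (mod_cast hn) (neg_nonpos.2 (hα i hi))
  · exact zero_le_one

lemma toReal_upperP (D : ℕ) (α : ℕ → ℝ) (n i : ℕ) :
    (upperP D α n i).toReal = if i ≤ D then (n : ℝ) ^ (-α i) else 0 := by
  unfold upperP
  split_ifs
  · exact ENNReal.toReal_ofReal (by positivity)
  · exact ENNReal.toReal_zero

lemma meanSelectedSupersets_upperP {n : ℕ} (k : ℕ) (hn : D < n) (α : ℕ → ℝ) :
    meanSelectedSupersets n (upperP D α n) k
      = ∑ i ∈ Icc k D, ((n - (k + 1)).choose (i - k) : ℝ) * (n : ℝ) ^ (-α i) := by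
  simp only [meanSelectedSupersets, toReal_upperP, mul_ite, mul_zero]
  rw [← sum_filter]
  congr 1
  ext i
  simp only [mem_filter, mem_Ico, mem_Icc]
  lia

lemma isTheta_meanSelectedSupersets_upperP {k : ℕ} (hkD : k ≤ D) (α : ℕ → ℝ) :
    (fun n => meanSelectedSupersets n (upperP D α n) k) =Θ[atTop] fun n => (n : ℝ) ^
      ((Icc k D).sup' (nonempty_Icc.2 hkD) (fun i => (i : ℝ) + 1 - α i) - (k + 1)) := by
  have hterm (i : ℕ) (hi : i ∈ Icc k D) :
      (fun n : ℕ => ((n - (k + 1)).choose (i - k) : ℝ) * (n : ℝ) ^ (-α i))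
        =Θ[atTop] fun n => (n : ℝ) ^ ((i : ℝ) + 1 - α i + -(k + 1)) := by
    refine ((isTheta_choose_sub (k + 1) (i - k)).mul (isTheta_refl _ _)).trans_eventuallyEq ?_
    filter_upwards [eventually_gt_atTop 0] with n hn
    rw [← Real.rpow_natCast, ← Real.rpow_add (mod_cast hn), Nat.cast_sub (mem_Icc.1 hi).1]
    ring_nf
  rw [sub_eq_add_neg, sup'_add]
  refine EventuallyEq.trans_isTheta ?_
    (isTheta_sum_rpow_sup' _ (fun i _ n => by positivity) hterm)
  filter_upwards [eventually_gt_atTop D] with n hn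
  exact meanSelectedSupersets_upperP k hn α

end PowerLaw

open Filter in
theorem expected_k_faces_upper_model_general {D k : ℕ} (hk : 1 ≤ k) (hkD : k ≤ D)
    {α : ℕ → ℝ} (hα : ∀ i ≤ D, 0 ≤ α i) {γ : ℝ}
    (hγ : γ = (Icc k D).sup' (nonempty_Icc.2 hkD) fun i => (i : ℝ) + 1 - α i) :
    (fun n => expectedFaces n (upperP D α n) k)
      =Θ[atTop] fun n => (n : ℝ) ^ min γ (k + 1) := by
  have hmean := isTheta_meanSelectedSupersets_upperP hkD α
  rw [← hγ] at hmean
  calc (fun n => expectedFaces n (upperP D α n) k)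
      =Θ[atTop] fun n => (n.choose (k + 1) : ℝ) *
        min 1 (meanSelectedSupersets n (upperP D α n) k) :=
        isTheta_expectedFaces (fun n i => upperP_le_one hα n i) hk
    _ =Θ[atTop] fun n => (n : ℝ) ^ (k + 1) * min 1 ((n : ℝ) ^ (γ - (k + 1))) :=
        (isTheta_choose (k + 1)).mul <| isTheta_min (fun _ => zero_le_one)
          (fun _ => meanSelectedSupersets_nonneg _ _ _) (fun _ => zero_le_one)
          (fun n => Real.rpow_nonneg n.cast_nonneg _) (isTheta_refl _ _) hmean
    _ =ᶠ[atTop] fun n => (n : ℝ) ^ min γ (k + 1) := by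
        filter_upwards [eventually_ge_atTop 1] with n hn
        rw [← Real.rpow_natCast, Nat.cast_succ, rpow_mul_min_one_rpow (mod_cast hn),
          sub_add_cancel]

/-- in the upper multiparametric model with `D` parameters, for `1 ≤ k ≤ D`
and `γ_k = max_{k ≤ i ≤ D} (i + 1 − α_i) < k + 1`, the expected number of `k`-dimensional
faces is `Θ(n^{γ_k})`. -/
theorem expected_k_faces_upper_model (D k : ℕ) (hk : 1 ≤ k) (hkD : k ≤ D)
    (α : ℕ → ℝ) (hα : ∀ i, 0 ≤ α i) (γ : ℝ)
    (hγ : γ = (Finset.Icc k D).sup' (Finset.nonempty_Icc.mpr hkD)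
      (fun i => (i : ℝ) + 1 - α i))
    (hγk : γ < k + 1) :
    (fun n => (∫⁻ ω,
        (((upperComplex n ω).faces.filter fun s => s.card = k + 1).card : ℝ≥0∞)
        ∂ selectionMeasure n (upperP D α n)).toReal)
      =Θ[Filter.atTop] (fun n => (n : ℝ) ^ γ) := by
  have h := expected_k_faces_upper_model_general hk hkD (fun i _ => hα i) hγ
  rwa [min_eq_left hγk.le] at h
end
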